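/- There are, up to isomorphism, exactly four (2)-pancyclic graphs on 11 vertices with at most 16 edges. -/

import Mathlib

open SimpleGraph

/-- The number of cycles of length `k` in `G`, counted as subgraphs of `G`
isomorphic to the cycle graph `C_k`. -/
noncomputable def cycleCount {V : Type*} (G : SimpleGraph V) (k : ℕ) : ℕ :=
  {H : G.Subgraph | Nonempty (H.coe ≃g cycleGraph k)}.ncard

/-- A graph on `v ≥ 3` vertices is `(r)`-pancyclic if it contains precisely `r`
cycles of every length from `3` to `v`. -/
def IsRPancyclic {V : Type*} [Fintype V] (G : SimpleGraph V) (r : ℕ) : Prop :=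
  3 ≤ Fintype.card V ∧
    ∀ k : ℕ, 3 ≤ k → k ≤ Fintype.card V → cycleCount G k = r

/-- There are, up to isomorphism, exactly `N` graphs on `v` vertices with at most
`b` edges satisfying the given pancyclicity property with parameter `r`. -/
def ExactlyNUpToIso (r N v b : ℕ) : Prop :=
  ∃ Gs : Fin N → SimpleGraph (Fin v),
    (∀ i j : Fin N, i ≠ j → IsEmpty (Gs i ≃g Gs j)) ∧
    (∀ i : Fin N, IsRPancyclic (Gs i) r ∧ (Gs i).edgeSet.ncard ≤ b) ∧
    (∀ (W : Type) [Fintype W] (G : SimpleGraph W), Fintype.card W = v →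
      G.edgeSet.ncard ≤ b → IsRPancyclic G r → ∃ i : Fin N, Nonempty (G ≃g Gs i))

/-! ### Cycles as edge sets of cyclic parametrisations -/

/-- `φ` runs once around a cycle of `G` of length `n + 3`. -/
def IsCyc {V : Type*} (G : SimpleGraph V) {n : ℕ} (φ : Fin (n + 3) → V) : Prop :=
  Function.Injective φ ∧ ∀ i, G.Adj (φ i) (φ (i + 1))

/-- The edge set of the closed walk `φ`. -/
def ES {V : Type*} {n : ℕ} (φ : Fin (n + 3) → V) : Set (Sym2 V) :=
  Set.range (fun i => s(φ i, φ (i + 1)))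

/-- The edge sets of the cycles of length `n + 3`. -/
def cycSet {V : Type*} (G : SimpleGraph V) (n : ℕ) : Set (Set (Sym2 V)) :=
  {E | ∃ φ : Fin (n + 3) → V, IsCyc G φ ∧ ES φ = E}

theorem mem_ES {V : Type*} {n : ℕ} {φ : Fin (n + 3) → V} (h : Function.Injective φ)
    (i j : Fin (n + 3)) : s(φ i, φ j) ∈ ES φ ↔ j = i + 1 ∨ i = j + 1 := by
  constructor
  · rintro ⟨k, hk⟩
    simp only [Sym2.eq_iff] at hk
    rcases hk with ⟨h1, h2⟩ | ⟨h1, h2⟩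
    · left; rw [← h h1, ← h h2]
    · right; rw [← h h1, ← h h2]
  · rintro (rfl | rfl)
    · exact ⟨i, rfl⟩
    · exact ⟨j, Sym2.eq_swap⟩

theorem cyc_adj {n : ℕ} (i j : Fin (n + 3)) :
    (cycleGraph (n + 3)).Adj i j ↔ j = i + 1 ∨ i = j + 1 := by
  rw [cycleGraph_adj (n := n + 1)]
  constructor
  · rintro (h | h)
    · right; rw [← h]; abel
    · left; rw [← h]; abel
  · rintro (h | h)
    · right; rw [h]; abel
    · left; rw [h]; abel

theorem cycleCount_eq {V : Type*} (G : SimpleGraph V) (n : ℕ) :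
    cycleCount G (n + 3) = (cycSet G n).ncard := by
  have himg : cycSet G n = Subgraph.edgeSet ''
      {H : G.Subgraph | Nonempty (H.coe ≃g cycleGraph (n + 3))} := by
    ext E
    constructor
    · rintro ⟨φ, ⟨hinj, hadj⟩, rfl⟩
      let H : G.Subgraph :=
        { verts := Set.range φ
          Adj := fun u v => s(u, v) ∈ ES φ
          adj_sub := by
            rintro u v ⟨i, hi⟩
            simp only [Sym2.eq_iff] at hi
            rcases hi with ⟨rfl, rfl⟩ | ⟨rfl, rfl⟩
            · exact hadj i
            · exact (hadj i).symm
          edge_vert := by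
            rintro u v ⟨i, hi⟩
            simp only [Sym2.eq_iff] at hi
            rcases hi with ⟨rfl, rfl⟩ | ⟨rfl, rfl⟩ <;> exact ⟨_, rfl⟩
          symm := ⟨by
            intro u v h
            rwa [Sym2.eq_swap]⟩ }
      refine ⟨H, ⟨?_⟩, ?_⟩
      · refine Iso.symm ⟨Equiv.ofInjective φ hinj, ?_⟩
        intro i j
        rw [cyc_adj, ← mem_ES hinj]
        rfl
      · ext e
        induction e with
        | _ u v => rfl
    · rintro ⟨H, ⟨e⟩, rfl⟩
      refine ⟨fun i => (e.symm i : V), ⟨?_, ?_⟩, ?_⟩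
      · intro i j hij
        exact e.symm.injective (Subtype.ext hij)
      · intro i
        apply H.adj_sub
        have : H.coe.Adj (e.symm i) (e.symm (i + 1)) := by
          rw [e.symm.map_adj_iff, cyc_adj]; exact Or.inl rfl
        exact this
      · ext x
        induction x with
        | _ u v =>
          rw [Subgraph.mem_edgeSet]
          constructor
          · rintro ⟨i, hi⟩
            have : H.coe.Adj (e.symm i) (e.symm (i + 1)) := by
              rw [e.symm.map_adj_iff, cyc_adj]; exact Or.inl rfl
            have h2 : H.Adj (e.symm i) (e.symm (i + 1)) := this
            simp only [Sym2.eq_iff] at hi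
            rcases hi with ⟨rfl, rfl⟩ | ⟨rfl, rfl⟩
            · exact h2
            · exact h2.symm
          · intro h
            have h2 : H.coe.Adj ⟨u, h.fst_mem⟩ ⟨v, h.snd_mem⟩ := h
            rw [← e.map_adj_iff, cyc_adj] at h2
            rcases h2 with h2 | h2
            · refine ⟨e ⟨u, h.fst_mem⟩, ?_⟩
              simp only [← h2]
              simp
            · refine ⟨e ⟨v, h.snd_mem⟩, ?_⟩
              simp only [← h2]
              simp [Sym2.eq_swap]
  rw [himg, Set.InjOn.ncard_image]
  · rfl
  · have key : ∀ H : G.Subgraph, Nonempty (H.coe ≃g cycleGraph (n + 3)) →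
        ∀ v, v ∈ H.verts ↔ ∃ w, H.Adj v w := by
      rintro H ⟨e⟩ v
      constructor
      · intro hv
        refine ⟨e.symm (e ⟨v, hv⟩ + 1), ?_⟩
        have : H.coe.Adj ⟨v, hv⟩ (e.symm (e ⟨v, hv⟩ + 1)) := by
          rw [← e.map_adj_iff, cyc_adj]; left; simp
        exact this
      · rintro ⟨w, hw⟩; exact hw.fst_mem
    intro H1 h1 H2 h2 h
    have hadj : ∀ u v, H1.Adj u v ↔ H2.Adj u v := by
      intro u v
      rw [← Subgraph.mem_edgeSet, ← Subgraph.mem_edgeSet, h]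
    apply Subgraph.ext
    · ext v
      rw [key H1 h1, key H2 h2]
      simp [hadj]
    · ext u v; exact hadj u v

theorem cycSet_finite {V : Type*} [Finite V] (G : SimpleGraph V) (n : ℕ) :
    (cycSet G n).Finite := Set.toFinite _

theorem cycSet_mono {V : Type*} {G G' : SimpleGraph V} (h : G ≤ G') (n : ℕ) :
    cycSet G n ⊆ cycSet G' n := by
  rintro E ⟨φ, ⟨h1, h2⟩, h3⟩
  exact ⟨φ, ⟨h1, fun i => h (h2 i)⟩, h3⟩

theorem cycleCount_mono {V : Type*} [Finite V] {G G' : SimpleGraph V} (h : G ≤ G') (n : ℕ) :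
    cycleCount G (n + 3) ≤ cycleCount G' (n + 3) := by
  rw [cycleCount_eq, cycleCount_eq]
  exact Set.ncard_le_ncard (cycSet_mono h n) (cycSet_finite _ _)

theorem cycleCount_le_of_emb {V W : Type*} [Finite W] {G : SimpleGraph V} {G' : SimpleGraph W}
    (e : G ≃g G') (n : ℕ) : cycleCount G (n + 3) ≤ cycleCount G' (n + 3) := by
  rw [cycleCount_eq, cycleCount_eq]
  have hinj : Function.Injective (Set.image (Sym2.map e)) :=
    (Sym2.map.injective e.injective).image_injective
  rw [← Set.ncard_image_of_injective _ hinj]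
  refine Set.ncard_le_ncard ?_ (cycSet_finite _ _)
  rintro _ ⟨_, ⟨φ, ⟨h1, h2⟩, rfl⟩, rfl⟩
  refine ⟨e ∘ φ, ⟨e.injective.comp h1, fun i => e.map_adj_iff.2 (h2 i)⟩, ?_⟩
  simp only [ES, ← Set.range_comp]
  rfl

theorem cycleCount_iso {V W : Type*} [Finite V] [Finite W] {G : SimpleGraph V}
    {G' : SimpleGraph W} (e : G ≃g G') (n : ℕ) :
    cycleCount G (n + 3) = cycleCount G' (n + 3) :=
  le_antisymm (cycleCount_le_of_emb e n) (cycleCount_le_of_emb e.symm n)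

/-! ### Adding one edge -/

/-- The edge set determines the parametrisation once two consecutive vertices are fixed. -/
theorem ES_inj {V : Type*} {n : ℕ} {φ ψ : Fin (n + 3) → V} (hφ : Function.Injective φ)
    (hψ : Function.Injective ψ) (h : ES φ = ES ψ) (h0 : φ 0 = ψ 0) (h1 : φ 1 = ψ 1) : φ = ψ := by
  have step : ∀ i, φ i = ψ i → φ (i + 1) = ψ (i + 1) → φ (i + 1 + 1) = ψ (i + 1 + 1) := by
    intro i hi hi1
    have hm : s(φ (i + 1), φ (i + 1 + 1)) ∈ ES ψ := h ▸ ⟨i + 1, rfl⟩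
    obtain ⟨j, hj⟩ := hm
    simp only [Sym2.eq_iff] at hj
    rcases hj with ⟨a, b⟩ | ⟨a, b⟩
    · rw [hi1] at a
      rw [← b, hψ a]
    · rw [hi1] at b
      have hji : j = i := add_right_cancel (hψ b)
      rw [hji, ← hi] at a
      have := hφ a
      exfalso
      have h2 : (1 + 1 : Fin (n + 3)) = 0 := by
        have : i + (1 + 1) = i + 0 := by rw [← add_assoc, ← this, add_zero]
        exact add_left_cancel this
      simp [Fin.ext_iff, Fin.val_add] at h2
      rw [Nat.mod_eq_of_lt (by omega)] at h2
      omega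
  have main : ∀ k : ℕ, φ (Fin.ofNat (n + 3) k) = ψ (Fin.ofNat (n + 3) k) ∧
      φ (Fin.ofNat (n + 3) k + 1) = ψ (Fin.ofNat (n + 3) k + 1) := by
    intro k
    induction k with
    | zero => simpa using ⟨h0, h1⟩
    | succ k ih =>
      have e : Fin.ofNat (n + 3) (k + 1) = Fin.ofNat (n + 3) k + 1 := by
        ext; simp [Fin.val_add]
      rw [e]
      exact ⟨ih.2, step _ ih.1 ih.2⟩
  funext i
  have := (main i).1
  rwa [Fin.ofNat_val_eq_self] at this

theorem exists_rot {V : Type*} {G : SimpleGraph V} {n : ℕ} {φ : Fin (n + 3) → V}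
    (hφ : IsCyc G φ) {a b : V} (h : s(b, a) ∈ ES φ) :
    ∃ ψ : Fin (n + 3) → V, IsCyc G ψ ∧ ES ψ = ES φ ∧ ψ 0 = b ∧ ψ 1 = a := by
  obtain ⟨i, hi⟩ := h
  simp only [Sym2.eq_iff] at hi
  rcases hi with ⟨h1, h2⟩ | ⟨h1, h2⟩
  · refine ⟨fun j => φ (i + j), ⟨?_, ?_⟩, ?_, ?_, ?_⟩
    · intro x y hxy; exact add_left_cancel (hφ.1 hxy)
    · intro j
      have := hφ.2 (i + j)
      rwa [add_assoc] at this
    · ext x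
      constructor
      · rintro ⟨j, rfl⟩
        exact ⟨i + j, by simp only [add_assoc]⟩
      · rintro ⟨j, rfl⟩
        refine ⟨j - i, ?_⟩
        have e1 : i + (j - i) = j := by abel
        have e2 : i + (j - i + 1) = j + 1 := by abel
        simp only [e1, e2]
    · simpa using h1
    · simpa using h2
  · refine ⟨fun j => φ (i + 1 - j), ⟨?_, ?_⟩, ?_, ?_, ?_⟩
    · intro x y hxy; exact sub_right_injective (hφ.1 hxy)
    · intro j
      have := hφ.2 (i + 1 - (j + 1))
      have e : i + 1 - (j + 1) + 1 = i + 1 - j := by abel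
      rw [e] at this
      exact this.symm
    · ext x
      constructor
      · rintro ⟨j, rfl⟩
        refine ⟨i + 1 - (j + 1), ?_⟩
        have e : i + 1 - (j + 1) + 1 = i + 1 - j := by abel
        simp only [e]
        exact Sym2.eq_swap
      · rintro ⟨j, rfl⟩
        refine ⟨i - j, ?_⟩
        have e1 : i + 1 - (i - j) = j + 1 := by abel
        have e2 : i + 1 - (i - j + 1) = j := by abel
        simp only [e1, e2]
        exact Sym2.eq_swap
    · simpa using h2
    · simpa using h1

open Classical in
/-- The lists of `k + 1` intermediate vertices in `F` of the paths from `v` to `b`. -/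
noncomputable def pathsF {V : Type*} (G : SimpleGraph V) (b : V) :
    ℕ → V → Finset V → Finset (List V)
  | 0, v, F => (F.filter (fun w => G.Adj v w ∧ G.Adj b w)).image (fun w => [w])
  | k + 1, v, F =>
    (F.filter (fun w => G.Adj v w)).biUnion fun w =>
      (pathsF G b k w (F.erase w)).image (fun l => w :: l)

open Classical in
theorem card_pathsF_zero {V : Type*} (G : SimpleGraph V) (b v : V) (F : Finset V) :
    (pathsF G b 0 v F).card = ∑ _w ∈ F.filter (fun w => G.Adj v w ∧ G.Adj b w), 1 := by
  rw [pathsF, Finset.card_image_of_injective, Finset.card_eq_sum_ones]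
  intro x y h
  simpa using h

open Classical in
theorem card_pathsF_succ {V : Type*} (G : SimpleGraph V) (b v : V) (F : Finset V) (k : ℕ) :
    (pathsF G b (k + 1) v F).card =
      ∑ w ∈ F.filter (fun w => G.Adj v w), (pathsF G b k w (F.erase w)).card := by
  rw [pathsF, Finset.card_biUnion]
  · refine Finset.sum_congr rfl fun w _ => ?_
    rw [Finset.card_image_of_injective]
    intro x y h
    simpa using h
  · intro x _ y _ hxy
    rw [Function.onFun, Finset.disjoint_left]
    intro l hl hl'
    simp only [Finset.mem_image] at hl hl'
    obtain ⟨l1, _, rfl⟩ := hl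
    obtain ⟨l2, _, h⟩ := hl'
    simp only [List.cons.injEq] at h
    exact hxy h.1.symm

theorem mem_pathsF {V : Type*} (G : SimpleGraph V) (b : V) (k : ℕ) :
    ∀ (v : V) (F : Finset V) (l : List V), l ∈ pathsF G b k v F ↔
      l.length = k + 1 ∧ l.Nodup ∧ (∀ x ∈ l, x ∈ F) ∧ List.IsChain G.Adj (v :: (l ++ [b])) := by
  classical
  induction k with
  | zero =>
    intro v F l
    simp only [pathsF, Finset.mem_image, Finset.mem_filter]
    constructor
    · rintro ⟨w, ⟨h1, h2, h3⟩, rfl⟩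
      simp [h1, h2, h3.symm]
    · rintro ⟨h1, h2, h3, h4⟩
      obtain ⟨w, rfl⟩ := List.length_eq_one_iff.1 h1
      simp at h3 h4
      exact ⟨w, ⟨h3, h4.1, h4.2.symm⟩, rfl⟩
  | succ k ih =>
    intro v F l
    simp only [pathsF, Finset.mem_biUnion, Finset.mem_image, Finset.mem_filter]
    constructor
    · rintro ⟨w, ⟨h1, h2⟩, l', hl', rfl⟩
      rw [ih] at hl'
      obtain ⟨a1, a2, a3, a4⟩ := hl'
      refine ⟨by simp [a1], ?_, ?_, ?_⟩
      · rw [List.nodup_cons]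
        exact ⟨fun hw => (Finset.mem_erase.1 (a3 w hw)).1 rfl, a2⟩
      · intro x hx
        rcases List.mem_cons.1 hx with rfl | hx
        · exact h1
        · exact (Finset.mem_erase.1 (a3 x hx)).2
      · simp only [List.cons_append, List.isChain_cons_cons]
        exact ⟨h2, a4⟩
    · rintro ⟨h1, h2, h3, h4⟩
      cases l with
      | nil => simp at h1
      | cons w l' =>
        simp only [List.cons_append, List.isChain_cons_cons] at h4
        rw [List.nodup_cons] at h2
        refine ⟨w, ⟨h3 w (by simp), h4.1⟩, l', ?_, rfl⟩
        rw [ih]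
        refine ⟨by simpa using h1, h2.2, ?_, h4.2⟩
        intro x hx
        rw [Finset.mem_erase]
        exact ⟨fun h => h2.1 (h ▸ hx), h3 x (by simp [hx])⟩

/-- The parametrisation given by a list of intermediate vertices. -/
def param {V : Type*} (a b : V) (n : ℕ) (l : List V) : Fin (n + 3) → V :=
  fun i => (b :: a :: l).getD i b

theorem fin_succ_val {n : ℕ} (i : Fin (n + 3)) :
    ((i + 1 : Fin (n + 3)) : ℕ) = if (i : ℕ) = n + 2 then 0 else (i : ℕ) + 1 := by
  rw [Fin.val_add_one]
  simp [Fin.ext_iff]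

theorem param_isCyc {V : Type*} [Fintype V] [DecidableEq V] {G : SimpleGraph V} {a b : V}
    (hab : a ≠ b) {n : ℕ} {l : List V}
    (hl : l ∈ pathsF G b n a (Finset.univ \ {a, b})) :
    IsCyc (G ⊔ edge a b) (param a b n l) := by
  rw [mem_pathsF] at hl
  obtain ⟨h1, h2, h3, h4⟩ := hl
  have hnd : (b :: a :: l).Nodup := by
    simp only [List.nodup_cons, List.mem_cons, not_or]
    refine ⟨⟨hab.symm, fun h => ?_⟩, fun h => ?_, h2⟩
    · simpa using h3 b h
    · simpa using h3 a h
  have hlen : (b :: a :: l).length = n + 3 := by simp [h1]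
  constructor
  · intro i j hij
    simp only [param] at hij
    rw [List.getD_eq_getElem _ _ (by omega), List.getD_eq_getElem _ _ (by omega)] at hij
    exact Fin.ext ((List.Nodup.getElem_inj_iff hnd).1 hij)
  · have hch : List.IsChain (G ⊔ edge a b).Adj (b :: a :: (l ++ [b])) := by
      rw [List.isChain_cons_cons]
      refine ⟨?_, ?_⟩
      · rw [sup_adj, edge_adj]
        right; exact ⟨Or.inr ⟨rfl, rfl⟩, hab.symm⟩
      · exact h4.imp (fun _ _ h => Or.inl h)
    rw [List.isChain_iff_getElem] at hch
    intro i
    have hi := hch i (by simp [h1]; try omega)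
    have e : b :: a :: (l ++ [b]) = (b :: a :: l) ++ [b] := by simp
    have e1 : (b :: a :: (l ++ [b]))[(i : ℕ)]'(by simp [h1]; try omega) = param a b n l i := by
      simp only [param]
      rw [List.getD_eq_getElem _ _ (by omega)]
      simp only [e]
      rw [List.getElem_append_left]
    have e2 : (b :: a :: (l ++ [b]))[(i : ℕ) + 1]'(by simp [h1]; omega)
        = param a b n l (i + 1) := by
      simp only [param, fin_succ_val]
      split_ifs with h
      · simp only [e]
        rw [List.getElem_append_right (by simp [h1]; omega)]
        simp
      · rw [List.getD_eq_getElem _ _ (by omega)]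
        simp only [e]
        rw [List.getElem_append_left]
    rw [e1, e2] at hi
    exact hi

theorem exists_param {V : Type*} [Fintype V] [DecidableEq V] {G : SimpleGraph V} {a b : V}
    {n : ℕ} {ψ : Fin (n + 3) → V} (h : IsCyc (G ⊔ edge a b) ψ) (h0 : ψ 0 = b) (h1 : ψ 1 = a) :
    ∃ l ∈ pathsF G b n a (Finset.univ \ {a, b}), param a b n l = ψ := by
  have hL : List.ofFn ψ = b :: a :: List.ofFn (fun i : Fin (n + 1) => ψ i.succ.succ) := by
    rw [List.ofFn_succ, List.ofFn_succ, h0, ← h1]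
    rfl
  refine ⟨List.ofFn (fun i : Fin (n + 1) => ψ i.succ.succ), ?_, ?_⟩
  · rw [mem_pathsF]
    refine ⟨by simp, ?_, ?_, ?_⟩
    · rw [List.nodup_ofFn]
      intro i j hij
      exact Fin.succ_injective _ (Fin.succ_injective _ (h.1 hij))
    · intro x hx
      rw [List.mem_ofFn] at hx
      obtain ⟨i, rfl⟩ := hx
      simp only [Finset.mem_sdiff, Finset.mem_univ, true_and, Finset.mem_insert,
        Finset.mem_singleton, not_or]
      constructor
      · intro hh
        rw [← h1] at hh
        have := congrArg Fin.val (h.1 hh)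
        simp at this
      · intro hh
        rw [← h0] at hh
        have := congrArg Fin.val (h.1 hh)
        simp at this
    · have hget : ∀ (t : ℕ) (ht : t < (a :: (List.ofFn (fun i : Fin (n + 1) => ψ i.succ.succ)
          ++ [b])).length),
          (a :: (List.ofFn (fun i : Fin (n + 1) => ψ i.succ.succ) ++ [b]))[t] =
            ψ (Fin.ofNat (n + 3) (t + 1)) := by
        intro t ht
        simp only [List.length_cons, List.length_append, List.length_ofFn, List.length_nil] at ht
        rcases t with _ | t
        · simp only [List.getElem_cons_zero]
          rw [← h1]; congr 1
        · simp only [List.getElem_cons_succ]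
          by_cases hh : t < n + 1
          · rw [List.getElem_append_left (by simpa using hh), List.getElem_ofFn]
            congr 1
            ext
            simp [Nat.mod_eq_of_lt (show t + 1 + 1 < n + 3 by omega)]
          · have htn : t = n + 1 := by omega
            subst htn
            rw [List.getElem_append_right (by simp)]
            simp only [List.getElem_singleton]
            rw [← h0]
            congr 1
            ext
            simp
      rw [List.isChain_iff_getElem]
      intro t ht
      rw [hget, hget]
      have e : Fin.ofNat (n + 3) (t + 1 + 1) = Fin.ofNat (n + 3) (t + 1) + 1 := by
        ext; simp [Fin.val_add]
      rw [e]
      have hadj := h.2 (Fin.ofNat (n + 3) (t + 1))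
      rw [sup_adj, edge_adj] at hadj
      rcases hadj with hadj | ⟨hadj, _⟩
      · exact hadj
      · exfalso
        simp only [List.length_cons, List.length_append, List.length_ofFn, List.length_nil] at ht
        have hne : ∀ i j : Fin (n + 3), ψ i = ψ j → (i : ℕ) = j :=
          fun i j hij => congrArg Fin.val (h.1 hij)
        rw [← h0, ← h1, ← e] at hadj
        rcases hadj with ⟨g1, g2⟩ | ⟨g1, g2⟩
        · have k1 := hne _ _ g1
          have k2 := hne _ _ g2
          simp only [Fin.val_ofNat, Fin.val_one, Fin.val_zero] at k1 k2
          rw [Nat.mod_eq_of_lt (by omega)] at k1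
          have : t = 0 := by omega
          subst this
          rw [Nat.mod_eq_of_lt (by omega)] at k2
          omega
        · have k1 := hne _ _ g1
          simp only [Fin.val_ofNat, Fin.val_zero] at k1
          rw [Nat.mod_eq_of_lt (by omega)] at k1
          omega
  · funext i
    simp only [param, ← hL]
    rw [List.getD_eq_getElem _ _ (by simp; omega), List.getElem_ofFn]

theorem param_zero {V : Type*} (a b : V) (n : ℕ) (l : List V) : param a b n l 0 = b := rfl

theorem param_one {V : Type*} (a b : V) (n : ℕ) (l : List V) : param a b n l 1 = a := rfl

theorem cycleCount_add_edge {V : Type*} [Fintype V] [DecidableEq V] (G : SimpleGraph V) (a b : V)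
    (hab : a ≠ b) (hn : ¬ G.Adj a b) (n : ℕ) :
    cycleCount (G ⊔ edge a b) (n + 3) =
      cycleCount G (n + 3) + (pathsF G b n a (Finset.univ \ {a, b})).card := by
  have himg : (fun l => ES (param a b n l)) '' (pathsF G b n a (Finset.univ \ {a, b}) : Set (List V))
      = {E ∈ cycSet (G ⊔ edge a b) n | s(b, a) ∈ E} := by
    ext E
    constructor
    · rintro ⟨l, hl, rfl⟩
      exact ⟨⟨_, param_isCyc hab hl, rfl⟩, ⟨0, by simp [param_zero, param_one]⟩⟩
    · rintro ⟨⟨φ, hφ, rfl⟩, hE⟩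
      obtain ⟨ψ, hψ, hES, h0, h1⟩ := exists_rot hφ hE
      obtain ⟨l, hl, rfl⟩ := exists_param hψ h0 h1
      exact ⟨l, hl, hES⟩
  have hinj : Set.InjOn (fun l => ES (param a b n l))
      (pathsF G b n a (Finset.univ \ {a, b}) : Set (List V)) := by
    intro l hl l' hl' h
    have h2 := ES_inj (param_isCyc hab hl).1 (param_isCyc hab hl').1 h rfl rfl
    have hl1 := ((mem_pathsF _ _ _ _ _ _).1 hl).1
    have hl2 := ((mem_pathsF _ _ _ _ _ _).1 hl').1
    refine List.ext_getElem (by omega) fun t ht ht' => ?_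
    have h3 := congrFun h2 ⟨t + 2, by omega⟩
    simp only [param] at h3
    rw [List.getD_eq_getElem _ _ (by simp; omega), List.getD_eq_getElem _ _ (by simp; omega)] at h3
    simpa using h3
  have hold : {E ∈ cycSet (G ⊔ edge a b) n | s(b, a) ∉ E} = cycSet G n := by
    ext E
    constructor
    · rintro ⟨⟨φ, ⟨hi, hadj⟩, rfl⟩, hE⟩
      refine ⟨φ, ⟨hi, fun i => ?_⟩, rfl⟩
      have := hadj i
      rw [sup_adj, edge_adj] at this
      rcases this with h | ⟨⟨h1, h2⟩ | ⟨h1, h2⟩, _⟩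
      · exact h
      · exact (hE ⟨i, by simp only [h1, h2]; exact Sym2.eq_swap⟩).elim
      · exact (hE ⟨i, by simp only [h1, h2]⟩).elim
    · intro hE
      refine ⟨cycSet_mono le_sup_left n hE, ?_⟩
      obtain ⟨φ, ⟨hi, hadj⟩, rfl⟩ := hE
      rintro ⟨i, h⟩
      have := hadj i
      simp only [Sym2.eq_iff] at h
      rcases h with ⟨h1, h2⟩ | ⟨h1, h2⟩
      · rw [h1, h2] at this; exact hn this.symm
      · rw [h1, h2] at this; exact hn this
  have hsplit : cycSet (G ⊔ edge a b) n = {E ∈ cycSet (G ⊔ edge a b) n | s(b, a) ∉ E} ∪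
      {E ∈ cycSet (G ⊔ edge a b) n | s(b, a) ∈ E} := by
    ext E
    simp only [Set.mem_union, Set.mem_ofPred_eq]
    tauto
  rw [cycleCount_eq, cycleCount_eq, hsplit, Set.ncard_union_eq, hold, ← himg, hinj.ncard_image,
    Set.ncard_coe_finset]
  · rw [Set.disjoint_left]
    rintro E ⟨_, h⟩ ⟨_, h'⟩
    exact h h'

theorem cycleCount_bot {V : Type*} (n : ℕ) : cycleCount (⊥ : SimpleGraph V) (n + 3) = 0 := by
  rw [cycleCount_eq]
  convert Set.ncard_empty (Set (Sym2 V))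
  ext E
  simp only [Set.mem_empty_iff_false, iff_false]
  rintro ⟨φ, ⟨_, h⟩, _⟩
  exact h 0
/-- Bit test, phrased with the arithmetic primitives that the kernel evaluates fast. -/
def tb (m n : ℕ) : Bool := Nat.beq (Nat.land (Nat.shiftRight m n) 1) 1

/-- The vertices `0, …, 10`. -/
def verts : List ℕ := [0, 1, 2, 3, 4, 5, 6, 7, 8, 9, 10]

/-- `force x f` is `f x`, but the kernel evaluates `x` to a numeral first. -/
def force {α : Type} (x : ℕ) (f : ℕ → α) : α :=
  Nat.rec (motive := fun _ => α) (f 0) (fun n _ => f (Nat.succ n)) x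

/-- Sum of `f w` over the set bits `w` of `m` (at most `n` of them). -/
def sumBits (f : ℕ → ℕ) (n : ℕ) : ℕ → ℕ :=
  Nat.rec (motive := fun _ => ℕ → ℕ) (fun _ => 0)
    (fun _ ih m => Nat.rec (motive := fun _ => ℕ) 0
      (fun m' _ => force (Nat.log2 (Nat.succ m')) fun w =>
        Nat.add (f w) (ih (Nat.xor (Nat.succ m') (Nat.shiftLeft 1 w)))) m) n

/-- Number of paths from `v` to `b` with exactly `k + 1` intermediate vertices, all of them in the
bit set `free`, in the graph with adjacency bit matrix `A`. -/
def pc (A b k : ℕ) : ℕ → ℕ → ℕ :=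
  Nat.rec (motive := fun _ => ℕ → ℕ → ℕ)
    (fun v free => sumBits (fun _ => 1) 11
      (Nat.land (Nat.shiftRight A (Nat.mul 11 v)) (Nat.land (Nat.shiftRight A (Nat.mul 11 b)) free)))
    (fun _ ih v free0 => force free0 fun free =>
      sumBits (fun w => ih w (Nat.xor free (Nat.shiftLeft 1 w))) 11
        (Nat.land (Nat.shiftRight A (Nat.mul 11 v)) free)) k

/-- Add the edge `a b` to a bit matrix. -/
def addE (A a b : ℕ) : ℕ :=
  Nat.lor A (Nat.lor (Nat.shiftLeft 1 (Nat.add (Nat.mul 11 a) b))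
    (Nat.shiftLeft 1 (Nat.add (Nat.mul 11 b) a)))

/-- Update a list of cycle counts when the edge `a b` is added to the graph `A`, and pass it to
the continuation `K`; if one count exceeds two the answer is `true`. -/
def stepc (A a b free : ℕ) (c : List ℕ) : ℕ → (List ℕ → Bool) → Bool :=
  List.rec (motive := fun _ => ℕ → (List ℕ → Bool) → Bool) (fun _ K => K [])
    (fun x _ ih k K => force (Nat.add x (pc A b k a free)) fun y =>
      Bool.rec (motive := fun _ => Bool) true (ih (Nat.succ k) (fun t => K (y :: t)))
        (Nat.ble y 2)) c

/-- All vertices except `a` and `b`, as a bit set. -/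
def freeOf (a b : ℕ) : ℕ := Nat.xor (Nat.xor 2047 (Nat.shiftLeft 1 a)) (Nat.shiftLeft 1 b)

def step (A a b : ℕ) (c : List ℕ) (K : List ℕ → Bool) : Bool :=
  force (freeOf a b) fun free => stepc A a b free c 0 K

/-- The bit matrices of the graphs that survive. -/
def keys : List ℕ :=
  [749800316346796753068303682866523278, 666723571562981920386278426538945550,
   666743853971376664683830718813449230, 749820598756249307458019875180522510,
   671915863469756886016689398970592262, 671915868421516748014808918573198342,
   671936150829911492312361210847702022, 755012895614784135086550367214775302]

def leaf (A : ℕ) (c : List ℕ) : Bool :=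
  (!(c.all (fun x => Nat.beq x 2))) || keys.any (fun k => Nat.beq k A)

/-- Exhaustive search over all graphs between `A` and `A` plus all the edges in the list. -/
def search (ps : List (ℕ × ℕ)) : ℕ → List ℕ → Bool :=
  List.rec (motive := fun _ => ℕ → List ℕ → Bool) leaf
    (fun p _ ih A c =>
      Bool.rec (motive := fun _ => Bool) false
       (Bool.rec (motive := fun _ => Bool)
          (step A p.1 p.2 c fun c' => force (addE A p.1 p.2) fun A' => ih A' c') true
          (tb A (Nat.add (Nat.mul 11 p.1) p.2)))
       (ih A c)) ps

/-- The bit matrix of the cycle `0, 1, …, 10`. -/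
def A0 : ℕ := 666723566610012837420637990034615298

/-- Chords (with cyclic length at least `d`). -/
def chords (d : ℕ) : List (ℕ × ℕ) :=
  (verts.flatMap fun u => verts.map fun v => (u, v)).filter
    fun p => Nat.ble (p.1 + d) p.2 && Nat.ble (p.2 + d) (p.1 + 11)

/-! ### Correctness of the computation -/

theorem tb_eq (m n : ℕ) : tb m n = m.testBit n := by
  rw [Nat.testBit_eq_decide_div_mod_eq, tb]
  change Nat.beq ((m >>> n) &&& 1) 1 = _
  rw [Nat.and_one_is_mod, Nat.shiftRight_eq_div_pow]
  by_cases h : m / 2 ^ n % 2 = 1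
  · simp [h]
  · have : Nat.beq (m / 2 ^ n % 2) 1 = false := by
      rw [← Bool.not_eq_true, Nat.beq_eq]; exact h
    rw [this]; simp [h]

theorem force_eq {α : Type} (x : ℕ) (f : ℕ → α) : force x f = f x := by
  cases x <;> rfl

theorem sumBits_eq (f : ℕ → ℕ) (n : ℕ) : ∀ m, m < 2 ^ n →
    sumBits f n m = ∑ w ∈ (Finset.range n).filter (fun i => m.testBit i = true), f w := by
  induction n with
  | zero => intro m _; rfl
  | succ n ih =>
    intro m hm
    rcases m with _ | m'
    · simp [sumBits]
    · have hrec : sumBits f (n + 1) (m' + 1) = f (Nat.log2 (m' + 1)) +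
          sumBits f n ((m' + 1) ^^^ (1 <<< Nat.log2 (m' + 1))) := by
        change force (Nat.log2 (m' + 1)) (fun w => f w +
          sumBits f n ((m' + 1) ^^^ (1 <<< w))) = _
        rw [force_eq]
      rw [hrec]
      set m := m' + 1 with hmdef
      have hm0 : m ≠ 0 := by omega
      set w := Nat.log2 m with hw
      have hlt : m < 2 ^ (w + 1) := Nat.lt_log2_self
      have hle : 2 ^ w ≤ m := Nat.log2_self_le hm0
      have hwn : w < n + 1 := (Nat.log2_lt hm0).2 hm
      have hbit : m.testBit w = true := by
        rw [Nat.testBit_eq_decide_div_mod_eq]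
        have : m / 2 ^ w = 1 := by
          rw [Nat.div_eq_iff (by positivity)]
          rw [pow_succ] at hlt
          omega
        simp [this]
      have hbit' : ∀ i, (m ^^^ (1 <<< w)).testBit i = true ↔ i ≠ w ∧ m.testBit i = true := by
        intro i
        rw [Nat.testBit_xor, Nat.one_shiftLeft, Nat.testBit_two_pow]
        by_cases h : w = i
        · subst h; simp [hbit]
        · simp [h, Ne.symm h]
      have hbig : ∀ i, m.testBit i = true → i ≤ w := by
        intro i hi
        by_contra hcon
        rw [Nat.testBit_lt_two_pow (lt_of_lt_of_le hlt (Nat.pow_le_pow_right (by norm_num)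
          (by omega)))] at hi
        exact Bool.noConfusion hi
      have hm' : m ^^^ (1 <<< w) < 2 ^ n := by
        apply Nat.lt_pow_two_of_testBit
        intro i hi
        by_contra hcon
        rw [Bool.not_eq_false, hbit'] at hcon
        have := hbig i hcon.2
        omega
      rw [ih _ hm']
      have hset : (Finset.range (n + 1)).filter (fun i => m.testBit i = true) =
          insert w ((Finset.range n).filter (fun i => (m ^^^ (1 <<< w)).testBit i = true)) := by
        ext i
        simp only [Finset.mem_filter, Finset.mem_range, Finset.mem_insert, hbit']
        constructor
        · rintro ⟨h1, h2⟩
          have := hbig i h2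
          by_cases h : i = w
          · exact Or.inl h
          · exact Or.inr ⟨by omega, h, h2⟩
        · rintro (rfl | ⟨h1, h2, h3⟩)
          · exact ⟨hwn, hbit⟩
          · exact ⟨by omega, h3⟩
      rw [hset, Finset.sum_insert]
      intro hmem
      exact ((hbit' w).1 (Finset.mem_filter.1 hmem).2).1 rfl

/-- `A` is the adjacency bit matrix of `H`. -/
def MRep (A : ℕ) (H : SimpleGraph (Fin 11)) : Prop :=
  ∀ u v : Fin 11, H.Adj u v ↔ A.testBit (11 * u + v) = true

/-- `f` is the bit set of `F`. -/
def RepF (f : ℕ) (F : Finset (Fin 11)) : Prop :=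
  f < 2 ^ 11 ∧ ∀ w : Fin 11, w ∈ F ↔ f.testBit w = true

theorem sumBits_fin (f : ℕ → ℕ) (g : Fin 11 → ℕ) (m : ℕ) (S : Finset (Fin 11)) (h : RepF m S)
    (hfg : ∀ w ∈ S, f w = g w) : sumBits f 11 m = ∑ w ∈ S, g w := by
  rw [sumBits_eq _ _ _ h.1, Finset.sum_filter, Finset.sum_range]
  have : S = Finset.univ.filter (fun w : Fin 11 => m.testBit w = true) := by
    ext w; simp [h.2]
  rw [← Finset.sum_congr rfl hfg, this, Finset.sum_filter]

theorem repF_erase {f : ℕ} {F : Finset (Fin 11)} (h : RepF f F) {w : Fin 11} (hw : w ∈ F) :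
    RepF (f ^^^ (1 <<< (w : ℕ))) (F.erase w) := by
  refine ⟨Nat.xor_lt_two_pow h.1 ?_, fun x => ?_⟩
  · rw [Nat.one_shiftLeft]
    exact Nat.pow_lt_pow_right (by norm_num) w.2
  · rw [Nat.testBit_xor, Nat.one_shiftLeft, Nat.testBit_two_pow, Finset.mem_erase, h.2]
    have hw' := (h.2 w).1 hw
    by_cases hx : x = w
    · subst hx; simp [hw']
    · have : ¬ ((w : ℕ) = x) := fun hh => hx (Fin.ext hh.symm)
      simp [hx, this]

open Classical in
theorem repF_row {A f : ℕ} {H : SimpleGraph (Fin 11)} {F : Finset (Fin 11)} (hA : MRep A H)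
    (h : RepF f F) (v : Fin 11) :
    RepF ((A >>> (11 * (v : ℕ))) &&& f) (F.filter (fun w => H.Adj v w)) := by
  refine ⟨Nat.and_lt_two_pow _ h.1, fun x => ?_⟩
  rw [Nat.testBit_and, Nat.testBit_shiftRight, Finset.mem_filter, h.2, hA]
  simp [and_comm]

open Classical in
theorem pc_eq {A : ℕ} {H : SimpleGraph (Fin 11)} (hA : MRep A H) (b : Fin 11) (k : ℕ) :
    ∀ (v : Fin 11) (F : Finset (Fin 11)) (f : ℕ), RepF f F →
      pc A b k v f = (pathsF H b k v F).card := by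
  induction k with
  | zero =>
    intro v F f h
    rw [card_pathsF_zero]
    have h2 := repF_row hA (repF_row hA h b) v
    change sumBits (fun _ => 1) 11
      ((A >>> (11 * (v : ℕ))) &&& ((A >>> (11 * (b : ℕ))) &&& f)) = _
    rw [sumBits_fin _ (fun _ => 1) _ _ h2 (fun _ _ => rfl)]
    refine Finset.sum_congr ?_ (fun _ _ => rfl)
    ext w
    simp only [Finset.mem_filter]
    tauto
  | succ k ih =>
    intro v F f h
    rw [card_pathsF_succ]
    change force f (fun free =>
      sumBits (fun w => pc A b k w (free ^^^ (1 <<< w))) 11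
        ((A >>> (11 * (v : ℕ))) &&& free)) = _
    rw [force_eq]
    apply sumBits_fin _ _ _ _ (repF_row hA h v)
    intro w hw
    have := ih w _ _ (repF_erase h (Finset.mem_filter.1 hw).1)
    convert this

theorem repF_freeOf : ∀ a b : Fin 11, a ≠ b → RepF (freeOf a b) (Finset.univ \ {a, b}) := by
  unfold RepF
  decide +kernel

theorem rep_addE {A : ℕ} {H : SimpleGraph (Fin 11)} (hA : MRep A H) (a b : Fin 11) (hab : a ≠ b) :
    MRep (addE A a b) (H ⊔ edge a b) := by
  intro u v
  change _ ↔ (A ||| ((1 <<< (11 * (a : ℕ) + b)) ||| (1 <<< (11 * (b : ℕ) + a)))).testBit _ = true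
  rw [sup_adj, edge_adj, hA, Nat.testBit_or, Nat.testBit_or, Nat.one_shiftLeft, Nat.one_shiftLeft,
    Nat.testBit_two_pow, Nat.testBit_two_pow]
  simp only [Bool.or_eq_true, decide_eq_true_eq, Fin.ext_iff]
  have : (a : ℕ) ≠ b := fun h => hab (Fin.ext h)
  refine or_congr Iff.rfl ?_
  omega

/-- The cycle counts of lengths `3, …, 11`. -/
noncomputable def cnt (H : SimpleGraph (Fin 11)) : List ℕ :=
  (List.range' 0 9).map (fun j => cycleCount H (j + 3))

/-- Specification of the counts computed by `stepc`. -/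
def upd (A a b free : ℕ) : ℕ → List ℕ → List ℕ
  | _, [] => []
  | k, x :: xs => (x + pc A b k a free) :: upd A a b free (k + 1) xs

theorem stepc_sound (A a b free : ℕ) (c : List ℕ) : ∀ (k : ℕ) (K : List ℕ → Bool),
    stepc A a b free c k K = true →
      (∃ y ∈ upd A a b free k c, 2 < y) ∨ K (upd A a b free k c) = true := by
  induction c with
  | nil => intro k K h; exact Or.inr h
  | cons x xs ih =>
    intro k K h
    change force (x + pc A b k a free) (fun y =>
      Bool.rec (motive := fun _ => Bool) true (stepc A a b free xs (k + 1) (fun t => K (y :: t)))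
        (Nat.ble y 2)) = true at h
    rw [force_eq] at h
    by_cases hy : x + pc A b k a free ≤ 2
    · simp only [Nat.ble_eq_true_of_le hy] at h
      rcases ih _ _ h with ⟨y, h1, h2⟩ | h
      · exact Or.inl ⟨y, List.mem_cons_of_mem _ h1, h2⟩
      · exact Or.inr h
    · exact Or.inl ⟨_, List.mem_cons_self, by omega⟩

theorem upd_cnt {A : ℕ} {H : SimpleGraph (Fin 11)} (hA : MRep A H) (a b : Fin 11) (hab : a ≠ b)
    (hn : ¬ H.Adj a b) : upd A a b (freeOf a b) 0 (cnt H) = cnt (H ⊔ edge a b) := by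
  have key : ∀ n k : ℕ, upd A a b (freeOf a b) k
      ((List.range' k n).map (fun j => cycleCount H (j + 3))) =
      (List.range' k n).map (fun j => cycleCount (H ⊔ edge a b) (j + 3)) := by
    intro n
    induction n with
    | zero => intro k; rfl
    | succ n ih =>
      intro k
      simp only [List.range'_succ, List.map_cons, upd, ih]
      rw [cycleCount_add_edge H a b hab hn, pc_eq hA b k a _ _ (repF_freeOf a b hab)]
  exact key 9 0

theorem mem_cnt {H : SimpleGraph (Fin 11)} {y : ℕ} :
    y ∈ cnt H ↔ ∃ j < 9, cycleCount H (j + 3) = y := by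
  simp [cnt]

theorem rep_unique {A : ℕ} {H G : SimpleGraph (Fin 11)} (h : MRep A H) (h' : MRep A G) : H = G := by
  ext u v
  rw [h, h']

theorem search_sound (ps : List (ℕ × ℕ)) :
    (∀ p ∈ ps, p.1 < 11 ∧ p.2 < 11 ∧ p.1 ≠ p.2) →
    ∀ (A : ℕ) (H : SimpleGraph (Fin 11)), MRep A H → search ps A (cnt H) = true →
    ∀ G : SimpleGraph (Fin 11), H ≤ G →
      (∀ u v : Fin 11, G.Adj u v →
        H.Adj u v ∨ ((u : ℕ), (v : ℕ)) ∈ ps ∨ ((v : ℕ), (u : ℕ)) ∈ ps) →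
      (∀ j < 9, cycleCount G (j + 3) = 2) → ∃ key ∈ keys, MRep key G := by
  induction ps with
  | nil =>
    intro _ A H hA hs G hle hG hc
    have hGH : H = G := by
      ext u v
      exact ⟨fun h => hle h, fun h => by simpa using hG u v h⟩
    subst hGH
    change leaf A (cnt H) = true at hs
    rw [leaf, Bool.or_eq_true] at hs
    rcases hs with hs | hs
    · exfalso
      rw [Bool.not_eq_true', ← Bool.not_eq_true, List.all_eq_true] at hs
      apply hs
      intro y hy
      obtain ⟨j, hj, rfl⟩ := mem_cnt.1 hy
      rw [hc j hj]; rfl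
    · rw [List.any_eq_true] at hs
      obtain ⟨key, hk, h⟩ := hs
      rw [Nat.beq_eq] at h
      exact ⟨key, hk, h ▸ hA⟩
  | cons p ps ih =>
    intro hps A H hA hs G hle hG hc
    obtain ⟨a, b⟩ := p
    obtain ⟨ha, hb, hab⟩ := hps (a, b) (by simp)
    lift a to Fin 11 using ha
    lift b to Fin 11 using hb
    have hab' : a ≠ b := fun h => hab (by rw [h])
    have ih' := ih (fun p hp => hps p (by simp [hp]))
    change Bool.rec (motive := fun _ => Bool) false
       (Bool.rec (motive := fun _ => Bool)
          (step A a b (cnt H) fun c' => force (addE A a b) fun A' => search ps A' c') true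
          (tb A (11 * (a : ℕ) + b)))
       (search ps A (cnt H)) = true at hs
    have hs1 : search ps A (cnt H) = true := by
      cases h : search ps A (cnt H) with
      | true => rfl
      | false => rw [h] at hs; exact hs
    simp only [hs1, tb_eq] at hs
    have hrest : ∀ H' : SimpleGraph (Fin 11), H ≤ H' → (H'.Adj a b ∨ ¬ G.Adj a b) →
        ∀ u v : Fin 11, G.Adj u v →
        H'.Adj u v ∨ ((u : ℕ), (v : ℕ)) ∈ ps ∨ ((v : ℕ), (u : ℕ)) ∈ ps := by
      intro H' hH' hor u v huv
      rcases hG u v huv with h | h | h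
      · exact Or.inl (hH' h)
      · rcases List.mem_cons.1 h with h | h
        · simp only [Prod.mk.injEq] at h
          have e1 : u = a := Fin.ext h.1
          have e2 : v = b := Fin.ext h.2
          subst e1 e2
          exact Or.inl (hor.resolve_right (fun hh => hh huv))
        · exact Or.inr (Or.inl h)
      · rcases List.mem_cons.1 h with h | h
        · simp only [Prod.mk.injEq] at h
          have e1 : v = a := Fin.ext h.1
          have e2 : u = b := Fin.ext h.2
          subst e1 e2
          exact Or.inl (hor.resolve_right (fun hh => hh huv.symm)).symm
        · exact Or.inr (Or.inr h)
    by_cases hGab : G.Adj a b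
    · by_cases hHab : H.Adj a b
      · exact ih' A H hA hs1 G hle (hrest H le_rfl (Or.inl hHab)) hc
      · have htb : A.testBit (11 * (a : ℕ) + b) = false := by
          rw [← Bool.not_eq_true, ← hA]; exact hHab
        simp only [htb, step, force_eq] at hs
        have hle' : H ⊔ edge a b ≤ G := by
          apply sup_le hle
          rw [edge_le_iff]; exact Or.inr hGab
        have hs2 := stepc_sound _ _ _ _ _ _ _ hs
        rw [upd_cnt hA a b hab' hHab] at hs2
        rcases hs2 with ⟨y, hy, h2⟩ | hs2
        · exfalso
          obtain ⟨j, hj, rfl⟩ := mem_cnt.1 hy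
          have := cycleCount_mono hle' j
          rw [hc j hj] at this
          omega
        · refine ih' _ _ (rep_addE hA a b hab') hs2 G hle' (hrest _ le_sup_left (Or.inl ?_)) hc
          rw [sup_adj, edge_adj]
          exact Or.inr ⟨Or.inl ⟨rfl, rfl⟩, hab'⟩
    · exact ih' A H hA hs1 G hle (hrest H le_rfl (Or.inr hGab)) hc

/-- Build a graph edge by edge, with the list of cycle counts. -/
def build : List (ℕ × ℕ) → ℕ → List ℕ → Option (ℕ × List ℕ)
  | [], A, c => some (A, c)
  | p :: ps, A, c =>
    if p.1 < 11 ∧ p.2 < 11 ∧ p.1 ≠ p.2 ∧ A.testBit (11 * p.1 + p.2) = false then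
      build ps (addE A p.1 p.2) (upd A p.1 p.2 (freeOf p.1 p.2) 0 c)
    else none

theorem build_sound (ps : List (ℕ × ℕ)) : ∀ (A : ℕ) (H : SimpleGraph (Fin 11)) (A' : ℕ)
    (c' : List ℕ), MRep A H → build ps A (cnt H) = some (A', c') →
    ∃ H', MRep A' H' ∧ cnt H' = c' := by
  induction ps with
  | nil =>
    intro A H A' c' hA h
    simp only [build, Option.some.injEq, Prod.mk.injEq] at h
    exact ⟨H, h.1 ▸ hA, h.2⟩
  | cons p ps ih =>
    intro A H A' c' hA h
    obtain ⟨a, b⟩ := p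
    rw [build] at h
    split_ifs at h with hc
    obtain ⟨ha, hb, hab, hbit⟩ := hc
    simp only at ha hb hab hbit h
    lift a to Fin 11 using ha
    lift b to Fin 11 using hb
    have hab' : a ≠ b := fun h => hab (by rw [h])
    have hn : ¬ H.Adj a b := by rw [hA, hbit]; simp
    rw [upd_cnt hA a b hab' hn] at h
    exact ih _ _ _ _ (rep_addE hA a b hab') h

theorem rep_bot : MRep 0 ⊥ := by
  intro u v
  simp

theorem cnt_bot : cnt ⊥ = [0, 0, 0, 0, 0, 0, 0, 0, 0] := by
  simp [cnt, cycleCount_bot, List.range'_succ]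

theorem build_bot {ps : List (ℕ × ℕ)} {A' : ℕ} {c' : List ℕ}
    (h : build ps 0 [0, 0, 0, 0, 0, 0, 0, 0, 0] = some (A', c')) {H : SimpleGraph (Fin 11)}
    (hH : MRep A' H) : cnt H = c' := by
  rw [← cnt_bot] at h
  obtain ⟨H', h1, h2⟩ := build_sound ps 0 ⊥ A' c' rep_bot h
  rw [rep_unique hH h1, h2]

/-! ### The exhaustive search -/

theorem s_five : step A0 0 5 [0,0,0,0,0,0,0,0,1] (search (chords 5) (addE A0 0 5)) = true := by
  decide +kernel

theorem s_four : step A0 0 4 [0,0,0,0,0,0,0,0,1] (search (chords 4) (addE A0 0 4)) = true := by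
  decide +kernel

theorem s_three : step A0 0 3 [0,0,0,0,0,0,0,0,1] (search (chords 3) (addE A0 0 3)) = true := by
  decide +kernel

theorem s_two : step A0 0 2 [0,0,0,0,0,0,0,0,1] (search (chords 2) (addE A0 0 2)) = true := by
  decide +kernel

theorem s_all (v : Fin 11) (h2 : 2 ≤ (v : ℕ)) (h5 : (v : ℕ) ≤ 5) :
    step A0 0 v [0,0,0,0,0,0,0,0,1] (search (chords v) (addE A0 0 v)) = true := by
  obtain ⟨d, hd⟩ := v
  simp only at h2 h5
  have : d = 2 ∨ d = 3 ∨ d = 4 ∨ d = 5 := by omega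
  rcases this with rfl | rfl | rfl | rfl
  · exact s_two
  · exact s_three
  · exact s_four
  · exact s_five

/-! ### The graphs -/

/-- The graph of a bit matrix. -/
def gr (A : ℕ) : SimpleGraph (Fin 11) where
  Adj u v := u ≠ v ∧ (A.testBit (11 * u + v) = true ∨ A.testBit (11 * v + u) = true)
  symm := ⟨fun _ _ h => ⟨h.1.symm, h.2.symm⟩⟩
  loopless := ⟨fun _ h => h.1 rfl⟩

instance (A : ℕ) : DecidableRel (gr A).Adj := fun u v =>
  inferInstanceAs (Decidable (u ≠ v ∧
    (A.testBit (11 * u + v) = true ∨ A.testBit (11 * v + u) = true)))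

theorem rep_A0 : MRep A0 (gr A0) := by
  unfold MRep
  decide +kernel

theorem adj_A0 : ∀ u v : Fin 11, (gr A0).Adj u v ↔ (v = u + 1 ∨ u = v + 1) := by
  decide +kernel

/-- The edges of the cycle `0, …, 10`. -/
def cycEdges : List (ℕ × ℕ) :=
  [(0, 1), (1, 2), (2, 3), (3, 4), (4, 5), (5, 6), (6, 7), (7, 8), (8, 9), (9, 10), (10, 0)]

theorem cnt_A0 : cnt (gr A0) = [0,0,0,0,0,0,0,0,1] :=
  build_bot (ps := cycEdges) (A' := A0) (by decide +kernel) rep_A0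

theorem chords_ok : ∀ d : Fin 6, 2 ≤ (d : ℕ) → ∀ p ∈ chords d, p.1 < 11 ∧ p.2 < 11 ∧ p.1 ≠ p.2 := by
  decide +kernel

theorem mem_chords : ∀ d : Fin 6, 2 ≤ (d : ℕ) → ∀ u v : Fin 11, (d : ℕ) ≤ (v - u : Fin 11) →
    (d : ℕ) ≤ (u - v : Fin 11) → ((u : ℕ), (v : ℕ)) ∈ chords d ∨ ((v : ℕ), (u : ℕ)) ∈ chords d := by
  decide +kernel

theorem chord_range : ∀ u v : Fin 11, u ≠ v → ¬ (v = u + 1 ∨ u = v + 1) →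
    2 ≤ ((v - u : Fin 11) : ℕ) ∧ ((v - u : Fin 11) : ℕ) ≤ 9 := by
  decide +kernel

theorem not_adj_zero : ∀ v : Fin 11, 2 ≤ (v : ℕ) → (v : ℕ) ≤ 9 → ¬ (gr A0).Adj 0 v := by
  decide +kernel

theorem half_le : ∀ v : Fin 11, (v : ℕ) ≤ ((0 - v : Fin 11) : ℕ) → (v : ℕ) ≤ 5 := by
  decide +kernel

/-- The isomorphism type of each surviving graph. -/
def cls : List (ℕ × ℕ × List (Fin 11)) :=
  [(749800316346796753068303682866523278, 0, [0,1,2,3,4,5,6,7,8,9,10]),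
   (666723571562981920386278426538945550, 1, [0,1,2,3,4,5,6,7,8,9,10]),
   (666743853971376664683830718813449230, 2, [0,1,2,3,4,5,6,7,8,9,10]),
   (749820598756249307458019875180522510, 3, [0,1,2,3,4,5,6,7,8,9,10]),
   (671915863469756886016689398970592262, 0, [2,1,0,7,8,9,10,6,5,4,3]),
   (671915868421516748014808918573198342, 3, [2,1,0,10,6,7,8,9,5,4,3]),
   (671936150829911492312361210847702022, 2, [2,1,0,10,9,5,6,7,8,4,3]),
   (755012895614784135086550367214775302, 1, [2,1,0,10,9,8,4,5,6,7,3])]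

/-- The four graphs. -/
def reps (i : Fin 4) : SimpleGraph (Fin 11) := gr (keys.getD i 0)

instance (i : Fin 4) : DecidableRel (reps i).Adj :=
  inferInstanceAs (DecidableRel (gr (keys.getD i 0)).Adj)

theorem cls_ok : ∀ key ∈ keys, ∃ i : Fin 4, ∃ q ∈ cls,
    (∀ u v : Fin 11, q.2.2.getD u 0 = q.2.2.getD v 0 → u = v) ∧
    (∀ u v : Fin 11, key.testBit (11 * u + v) = true ↔
      (reps i).Adj (q.2.2.getD u 0) (q.2.2.getD v 0)) := by
  decide +kernel

theorem exists_rep {G : SimpleGraph (Fin 11)} {key : ℕ} (hk : key ∈ keys) (h : MRep key G) :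
    ∃ i : Fin 4, Nonempty (G ≃g reps i) := by
  obtain ⟨i, q, -, hinj, hadj⟩ := cls_ok key hk
  refine ⟨i, ⟨⟨Equiv.ofBijective (fun u : Fin 11 => q.2.2.getD u 0)
    (Finite.injective_iff_bijective.1 (fun u v huv => hinj u v huv)), ?_⟩⟩⟩
  intro u v
  rw [h u v, hadj]
  rfl

/-- The added chords of the four graphs. -/
def repEdges (i : Fin 4) : List (ℕ × ℕ) :=
  [[(0, 2), (0, 3), (0, 7), (6, 10)], [(0, 2), (0, 3), (3, 7), (4, 8)],
   [(0, 2), (0, 3), (4, 8), (5, 9)], [(0, 2), (0, 3), (5, 9), (6, 10)]].getD i []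

theorem rep_reps : ∀ i : Fin 4, MRep (keys.getD i 0) (reps i) := by
  unfold MRep
  decide +kernel

theorem cnt_reps (i : Fin 4) : cnt (reps i) = [2,2,2,2,2,2,2,2,2] := by
  refine build_bot (ps := cycEdges ++ repEdges i) (A' := keys.getD i 0) ?_ (rep_reps i)
  revert i
  decide +kernel

theorem reps_pancyclic (i : Fin 4) : IsRPancyclic (reps i) 2 := by
  refine ⟨by simp, fun k h3 hk => ?_⟩
  rw [Fintype.card_fin] at hk
  obtain ⟨j, rfl⟩ : ∃ j, k = j + 3 := ⟨k - 3, by omega⟩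
  have : cycleCount (reps i) (j + 3) ∈ cnt (reps i) := mem_cnt.2 ⟨j, by omega, rfl⟩
  rw [cnt_reps] at this
  simpa using this

theorem reps_edges (i : Fin 4) : (reps i).edgeSet.ncard ≤ 16 := by
  rw [← SimpleGraph.coe_edgeFinset, Set.ncard_coe_finset]
  revert i
  decide +kernel

/-- An isomorphism invariant: ordered adjacent pairs with degrees `3` and `4`. -/
def inv34 (G : SimpleGraph (Fin 11)) [DecidableRel G.Adj] : ℕ :=
  (Finset.univ.filter (fun p : Fin 11 × Fin 11 =>
    G.Adj p.1 p.2 ∧ G.degree p.1 = 3 ∧ G.degree p.2 = 4)).card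

theorem inv34_iso {G G' : SimpleGraph (Fin 11)} [DecidableRel G.Adj] [DecidableRel G'.Adj]
    (e : G ≃g G') : inv34 G = inv34 G' := by
  refine Finset.card_bij (fun p _ => (e p.1, e p.2)) ?_ ?_ ?_
  · intro p hp
    simpa [e.map_adj_iff, e.degree_eq] using hp
  · rintro ⟨a, b⟩ _ ⟨c, d⟩ _ h
    simpa using h
  · rintro ⟨a, b⟩ hp
    refine ⟨(e.symm a, e.symm b), ?_, by simp⟩
    simpa [e.symm.map_adj_iff, e.symm.degree_eq] using hp

theorem inv34_ne : ∀ i j : Fin 4, i ≠ j → inv34 (reps i) ≠ inv34 (reps j) := by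
  decide +kernel

theorem isCyc_rot {W : Type} {G : SimpleGraph W} {φ : Fin 11 → W} (h : IsCyc (n := 8) G φ)
    (u : Fin 11) : IsCyc (n := 8) G (fun i : Fin 11 => φ (u + i)) := by
  refine ⟨fun a b hab => add_left_cancel (h.1 hab), fun i => ?_⟩
  have := h.2 (u + i)
  rw [add_assoc] at this
  exact this

theorem classify (G : SimpleGraph (Fin 11)) (hle : gr A0 ≤ G)
    (hc : ∀ j < 9, cycleCount G (j + 3) = 2) (v : Fin 11) (h2 : 2 ≤ (v : ℕ)) (h9 : (v : ℕ) ≤ 9)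
    (hv : G.Adj 0 v)
    (hmin : ∀ x y : Fin 11, G.Adj x y → ¬ (gr A0).Adj x y → (v : ℕ) ≤ (y - x : Fin 11)) :
    ∃ key ∈ keys, MRep key G := by
  have hno : ¬ (gr A0).Adj 0 v := not_adj_zero v h2 h9
  have h5 : (v : ℕ) ≤ 5 := half_le v (hmin v 0 hv.symm (fun h => hno h.symm))
  have hs := s_all v h2 h5
  have h0v : (0 : Fin 11) ≠ v := hv.ne
  rw [step, force_eq, ← cnt_A0] at hs
  have hs2 := stepc_sound _ _ _ _ _ _ _ hs
  have hu := upd_cnt rep_A0 0 v h0v hno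
  rw [Fin.val_zero] at hu
  rw [hu] at hs2
  have hle' : gr A0 ⊔ edge 0 v ≤ G := by
    apply sup_le hle
    rw [edge_le_iff]; exact Or.inr hv
  rcases hs2 with ⟨y, hy, hy2⟩ | hs2
  · exfalso
    obtain ⟨j, hj, rfl⟩ := mem_cnt.1 hy
    have := cycleCount_mono hle' j
    rw [hc j hj] at this
    omega
  · have hr := rep_addE rep_A0 0 v h0v
    rw [Fin.val_zero] at hr
    refine search_sound (chords v) (chords_ok ⟨v, by omega⟩ h2) _ _ hr hs2 G hle' ?_ hc
    intro x y hxy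
    by_cases hA : (gr A0).Adj x y
    · exact Or.inl (Or.inl hA)
    · exact Or.inr (mem_chords ⟨v, by omega⟩ h2 x y (hmin x y hxy hA)
        (hmin y x hxy.symm (fun h => hA h.symm)))

theorem exists_iso {W : Type} [Fintype W] (G : SimpleGraph W) (hW : Fintype.card W = 11)
    (hG : IsRPancyclic G 2) : ∃ i : Fin 4, Nonempty (G ≃g reps i) := by
  classical
  have hc : ∀ j < 9, cycleCount G (j + 3) = 2 := fun j hj => hG.2 _ (by omega) (by omega)
  -- transport along a Hamiltonian cycle
  have key : ∀ φ : Fin 11 → W, IsCyc (n := 8) G φ → ∃ e : G.comap φ ≃g G, (∀ i, e i = φ i) ∧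
      gr A0 ≤ G.comap φ ∧ ∀ j < 9, cycleCount (G.comap φ) (j + 3) = 2 := by
    intro φ hφ
    have hb : Function.Bijective φ :=
      (Fintype.bijective_iff_injective_and_card φ).2 ⟨hφ.1, by simp [hW]⟩
    let e : G.comap φ ≃g G := ⟨Equiv.ofBijective φ hb, by intro a b; rfl⟩
    refine ⟨e, fun _ => rfl, ?_, fun j hj => by rw [cycleCount_iso e, hc j hj]⟩
    intro u v huv
    rcases (adj_A0 u v).1 huv with rfl | rfl
    · exact hφ.2 u
    · exact (hφ.2 v).symm
  have fin : ∀ φ : Fin 11 → W, IsCyc (n := 8) G φ → (∃ k ∈ keys, MRep k (G.comap φ)) →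
      ∃ i : Fin 4, Nonempty (G ≃g reps i) := by
    rintro φ hφ ⟨k, hk, hr⟩
    obtain ⟨e, -⟩ := key φ hφ
    obtain ⟨i, ⟨f⟩⟩ := exists_rep hk hr
    exact ⟨i, ⟨e.symm.trans f⟩⟩
  have hex : ∃ φ : Fin 11 → W, IsCyc (n := 8) G φ := by
    have h := hc 8 (by norm_num)
    rw [cycleCount_eq] at h
    have hne : (cycSet G 8).Nonempty := by
      rw [← Set.ncard_pos]; omega
    obtain ⟨E, φ, hφ, -⟩ := hne
    exact ⟨φ, hφ⟩
  by_cases hP : ∃ d : ℕ, ∃ φ : Fin 11 → W, ∃ v : Fin 11, IsCyc (n := 8) G φ ∧ (v : ℕ) = d ∧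
      2 ≤ (v : ℕ) ∧ (v : ℕ) ≤ 9 ∧ G.Adj (φ 0) (φ v)
  · obtain ⟨φ, v, hφ, hvd, h2, h9, hv⟩ := Nat.find_spec hP
    apply fin φ hφ
    obtain ⟨e, he, hle, hc'⟩ := key φ hφ
    refine classify _ hle hc' v h2 h9 hv ?_
    intro x y hxy hA
    rw [adj_A0] at hA
    have hr := chord_range x y hxy.ne hA
    rw [hvd]
    refine Nat.find_min' hP ⟨_, y - x, isCyc_rot hφ x, rfl, hr.1, hr.2, ?_⟩
    simpa using hxy
  · obtain ⟨φ, hφ⟩ := hex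
    apply fin φ hφ
    obtain ⟨e, he, hle, hc'⟩ := key φ hφ
    have hGeq : gr A0 = G.comap φ := by
      refine le_antisymm hle fun x y hxy => ?_
      by_contra hA
      rw [adj_A0] at hA
      have hr := chord_range x y hxy.ne hA
      refine hP ⟨_, _, y - x, isCyc_rot hφ x, rfl, hr.1, hr.2, ?_⟩
      simpa using hxy
    exfalso
    have : cycleCount (gr A0) (0 + 3) = 2 := by rw [hGeq]; exact hc' 0 (by norm_num)
    have h3 : cycleCount (gr A0) (0 + 3) ∈ cnt (gr A0) := mem_cnt.2 ⟨0, by norm_num, rfl⟩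
    rw [this, cnt_A0] at h3
    revert h3
    decide

theorem two_pancyclic_count_order_11 : ExactlyNUpToIso 2 4 11 16 := by
  refine ⟨reps, fun i j hij => ⟨fun e => inv34_ne i j hij (inv34_iso e)⟩,
    fun i => ⟨reps_pancyclic i, reps_edges i⟩, ?_⟩
  intro W _ G hW _ hG
  exact exists_iso G hW hG
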